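/- Let q be an odd prime power with q ≡ 1 (mod 4). Then for any n ≥ 5 and any a₁, ..., aₙ ∈ F_q \ {0}, there exist points A₁, ..., Aₙ ∈ F_q² such that Q(Aᵢ, A_{i+1}) = aᵢ for all i = 1, ..., n, where A_{n+1} = A₁. -/

import Mathlib

open scoped Classical

def quadrance {F : Type*} [Field F] (A B : F × F) : F :=
  (B.1 - A.1) ^ 2 + (B.2 - A.2) ^ 2

/-!
If `I * I = -1`, the coordinates `x + I y` and `x - I y` turn the quadrance into the product form
`(x, y) ↦ x * y`, and we look for steps of prescribed nonzero norms `x * y` that add up to zero.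

Two steps of distinct norms can add up to any nonzero vector on either axis. So five steps close up
if two disjoint pairs of them have distinct norms: the pairs contribute `(1, 0)` and `(0, e)`, and
the last step is `(-1, -e)`. In the remaining families `a, a, a, a, b` with `a ≠ b`, three steps of
norm `a` add up to `(1, 0)` and the other two to `(-1, 0)`; if `a = b`, the steps are explicit.
For more than five steps, two steps can always be traded for a single one of suitable nonzero norm.
-/

theorem exists_eq_replicate_or_exists_ne_eq_cons_cons {α : Type*} {s : Multiset α} (hs : s ≠ 0) :
    (∃ a, s = Multiset.replicate s.card a) ∨ ∃ a b t, a ≠ b ∧ s = a ::ₘ b ::ₘ t := by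
  obtain ⟨a, has⟩ := Multiset.exists_mem_of_ne_zero hs
  by_cases h : ∀ b ∈ s, b = a
  · exact .inl ⟨a, Multiset.eq_replicate_of_mem h⟩
  · push Not at h
    obtain ⟨b, hbs, hba⟩ := h
    obtain ⟨t, rfl⟩ := Multiset.exists_cons_of_mem has
    obtain ⟨t, rfl⟩ :=
      Multiset.exists_cons_of_mem ((Multiset.mem_cons.1 hbs).resolve_left hba)
    exact .inr ⟨a, b, t, hba.symm, rfl⟩

theorem exists_forall_add_one_sub_eq {M : Type*} [AddCommGroup M] {n : ℕ} [NeZero n]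
    {v : ZMod n → M} (hv : ∑ i, v i = 0) : ∃ A : ZMod n → M, ∀ i, A (i + 1) - A i = v i := by
  obtain ⟨m, rfl⟩ := Nat.exists_eq_succ_of_ne_zero (NeZero.ne n)
  change Fin (m + 1) → M at v
  change ∃ A : Fin (m + 1) → M, ∀ i, A (i + 1) - A i = v i
  refine ⟨fun i => Fin.partialSum v i.castSucc, fun i => ?_⟩
  have step : Fin.partialSum v i.succ - Fin.partialSum v i.castSucc = v i := by
    rw [Fin.partialSum_succ, add_sub_cancel_left]
  cases i using Fin.lastCases with
  | last =>
    have total : Fin.partialSum v (Fin.last (m + 1)) = 0 := by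
      rw [Fin.partialSum, Fin.val_last, List.take_of_length_le (List.length_ofFn).le,
        List.sum_ofFn]
      exact hv
    rw [Fin.last_add_one, ← step]
    simp [total]
  | cast j => rw [Fin.coeSucc_eq_succ, ← step]; rfl

/-- `IsDisplacement s p` says that `p` is a sum of vectors whose norms for the product form
`(x, y) ↦ x * y` are, with multiplicity, the elements of `s`. -/
def IsDisplacement {R : Type*} [Semiring R] (s : Multiset R) (p : R × R) : Prop :=
  ∃ t : Multiset (R × R), t.map (fun v => v.1 * v.2) = s ∧ t.sum = p

namespace IsDisplacement

section Semiring

variable {R : Type*} [Semiring R] {s t : Multiset R} {p q : R × R}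

theorem add (hs : IsDisplacement s p) (ht : IsDisplacement t q) :
    IsDisplacement (s + t) (p + q) := by
  obtain ⟨s, rfl, rfl⟩ := hs
  obtain ⟨t, rfl, rfl⟩ := ht
  exact ⟨s + t, Multiset.map_add .., Multiset.sum_add ..⟩

theorem singleton {c : R} (hp : p.1 * p.2 = c) : IsDisplacement {c} p :=
  ⟨{p}, by rw [Multiset.map_singleton, hp], Multiset.sum_singleton p⟩

theorem cons_iff {c : R} : IsDisplacement (c ::ₘ s) p ↔
    ∃ v q, v.1 * v.2 = c ∧ IsDisplacement s q ∧ v + q = p := by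
  constructor
  · rintro ⟨t, ht, rfl⟩
    obtain ⟨v, hvt, hv, hs⟩ := (Multiset.map_eq_cons ..).2 ht
    exact ⟨v, (t.erase v).sum, hv, ⟨_, hs, rfl⟩, Multiset.sum_erase hvt⟩
  · rintro ⟨v, q, hv, hq, rfl⟩
    exact (singleton hv).add hq

theorem of_merge {c : R} (ht : ∀ v : R × R, v.1 * v.2 = c → IsDisplacement t v)
    (h : IsDisplacement (c ::ₘ s) p) : IsDisplacement (t + s) p := by
  obtain ⟨v, q, hv, hq, rfl⟩ := cons_iff.1 h
  exact (ht v hv).add hq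

theorem exists_steps {ι : Type*} {a : ι → R} {S : Finset ι}
    (h : IsDisplacement (S.val.map a) p) :
    ∃ v : ι → R × R, (∀ i ∈ S, (v i).1 * (v i).2 = a i) ∧ ∑ i ∈ S, v i = p := by
  induction S using Finset.cons_induction generalizing p with
  | empty =>
    obtain ⟨t, ht, rfl⟩ := h
    obtain rfl : t = 0 := by simpa using ht
    exact ⟨0, by simp⟩
  | cons i S hi ih =>
    rw [Finset.cons_val, Multiset.map_cons] at h
    obtain ⟨w, q, hw, hq, rfl⟩ := cons_iff.1 h
    obtain ⟨v, hv, rfl⟩ := ih hq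
    have off_i : ∀ j ∈ S, Function.update v i w j = v j := fun j hj =>
      Function.update_of_ne (ne_of_mem_of_not_mem hj hi) w v
    refine ⟨Function.update v i w, ?_, ?_⟩
    · rw [Finset.forall_mem_cons, Function.update_self]
      exact ⟨hw, fun j hj => by rw [off_i j hj, hv j hj]⟩
    · rw [Finset.sum_cons, Function.update_self, Finset.sum_congr rfl off_i]

end Semiring

theorem swap {R : Type*} [CommSemiring R] {s : Multiset R} {p : R × R}
    (h : IsDisplacement s p) : IsDisplacement s p.swap := by
  obtain ⟨t, rfl, rfl⟩ := h
  refine ⟨t.map Prod.swap, ?_, ?_⟩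
  · simp only [Multiset.map_map, Function.comp_apply, Prod.fst_swap, Prod.snd_swap, mul_comm]
  · exact (map_multiset_sum (AddEquiv.prodComm (M := R) (N := R)) t).symm

section Field

variable {F : Type*} [Field F] {a b c d e I x : F}

theorem pair_fst (hab : a ≠ b) (hx : x ≠ 0) : IsDisplacement {a, b} (x, 0) := by
  have hsub : a - b ≠ 0 := sub_ne_zero.2 hab
  refine ⟨{(a * x / (a - b), (a - b) / x), (-b * x / (a - b), -(a - b) / x)}, ?_, ?_⟩
  · have ha : a * x / (a - b) * ((a - b) / x) = a := by field_simp
    have hb : -b * x / (a - b) * (-(a - b) / x) = b := by field_simp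
    simp only [Multiset.insert_eq_cons, Multiset.map_cons, Multiset.map_singleton, ha, hb]
  · simp only [Multiset.insert_eq_cons, Multiset.sum_cons, Multiset.sum_singleton, Prod.mk_add_mk,
      Prod.mk.injEq]
    constructor <;> field_simp <;> ring

theorem pair_snd (hab : a ≠ b) (hx : x ≠ 0) : IsDisplacement {a, b} (0, x) :=
  (pair_fst hab hx).swap

theorem pair_add_pair_add_singleton (hab : a ≠ b) (hcd : c ≠ d) (he : e ≠ 0) :
    IsDisplacement ({a, b} + {c, d} + {e}) 0 := by
  have last : IsDisplacement {e} ((-1, -e) : F × F) := singleton (by ring)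
  convert ((pair_fst hab one_ne_zero).add (pair_snd hcd he)).add last
  simp [Prod.ext_iff]

theorem replicate_three [NeZero (2 : F)] (hI : I * I = -1) (a : F) :
    IsDisplacement (Multiset.replicate 3 a) (1, 0) := by
  have h2 : (2 : F) ≠ 0 := NeZero.ne 2
  refine ⟨{(1 - I, a * (1 + I) / 2), (1 + I, a * (1 - I) / 2), (-1, -a)}, ?_, ?_⟩
  · simp only [Multiset.eq_replicate, Multiset.insert_eq_cons, Multiset.map_cons,
      Multiset.map_singleton, Multiset.mem_cons, Multiset.mem_singleton, forall_eq_or_imp,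
      forall_eq]
    refine ⟨rfl, ?_, ?_, ?_⟩ <;> field_simp <;> linear_combination -a * hI
  · simp only [Multiset.insert_eq_cons, Multiset.sum_cons, Multiset.sum_singleton, Prod.mk_add_mk,
      Prod.mk.injEq]
    constructor <;> field_simp <;> ring

theorem replicate_three_add_pair [NeZero (2 : F)] (hI : I * I = -1) (hab : a ≠ b) :
    IsDisplacement (Multiset.replicate 3 a + {a, b}) 0 := by
  convert (replicate_three hI a).add (pair_fst hab (neg_ne_zero.2 one_ne_zero))
  simp [Prod.ext_iff]

theorem replicate_five [NeZero (2 : F)] (hI : I * I = -1) (a : F) :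
    IsDisplacement (Multiset.replicate 5 a) 0 := by
  by_cases h5 : (5 : F) = 0
  · refine ⟨Multiset.replicate 5 (1, a), by simp, ?_⟩
    rw [Multiset.sum_replicate, ← Nat.cast_smul_eq_nsmul F, Nat.cast_ofNat, h5, zero_smul]
  have h2 : (2 : F) ≠ 0 := NeZero.ne 2
  have h10 : (10 : F) ≠ 0 := by
    rw [show (10 : F) = 2 * 5 by norm_num]
    exact mul_ne_zero h2 h5
  have h20 : (20 : F) ≠ 0 := by
    rw [show (20 : F) = 2 * 10 by norm_num]
    exact mul_ne_zero h2 h10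
  -- The numbers `10, 1 ± 3I, -6 ± 2I` add up to zero, and so do their inverses, which involve only
  -- the primes `2` and `5` because `(1 + 3I)(1 - 3I) = 10` and `(-6 + 2I)(-6 - 2I) = 40`.
  refine ⟨{(10, a / 10), (1 + 3 * I, a * (1 - 3 * I) / 10), (1 - 3 * I, a * (1 + 3 * I) / 10),
    (-6 + 2 * I, a * (-3 - I) / 20), (-6 - 2 * I, a * (-3 + I) / 20)}, ?_, ?_⟩
  · simp only [Multiset.eq_replicate, Multiset.insert_eq_cons, Multiset.map_cons,
      Multiset.map_singleton, Multiset.mem_cons, Multiset.mem_singleton, forall_eq_or_imp,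
      forall_eq]
    refine ⟨rfl, ?_, ?_, ?_, ?_, ?_⟩ <;> field_simp
    · linear_combination -9 * a * hI
    · linear_combination -9 * a * hI
    · linear_combination -2 * a * hI
    · linear_combination -2 * a * hI
  · simp only [Multiset.insert_eq_cons, Multiset.sum_cons, Multiset.sum_singleton, Prod.mk_add_mk,
      Prod.mk_eq_zero]
    constructor <;> field_simp <;> ring

theorem pair_of_mul_eq {t : F} {v : F × F} (ht : t ≠ 0) (ht' : 1 + t ≠ 0) (hc : a + b / t ≠ 0)
    (hv : v.1 * v.2 = (1 + t) * (a + b / t)) : IsDisplacement {a, b} v := by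
  obtain ⟨x, y⟩ := v
  have hx : x ≠ 0 := left_ne_zero_of_mul (hv ▸ mul_ne_zero ht' hc)
  -- The first coordinate of `v` is divided in the ratio `1 : t`.
  refine ⟨{(x / (1 + t), a * (1 + t) / x), (t * x / (1 + t), b * (1 + t) / (t * x))}, ?_, ?_⟩
  · have ha : x / (1 + t) * (a * (1 + t) / x) = a := by field_simp
    have hb : t * x / (1 + t) * (b * (1 + t) / (t * x)) = b := by field_simp
    simp only [Multiset.insert_eq_cons, Multiset.map_cons, Multiset.map_singleton, ha, hb]
  · simp only [Multiset.insert_eq_cons, Multiset.sum_cons, Multiset.sum_singleton, Prod.mk_add_mk,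
      Prod.mk.injEq]
    constructor
    · field_simp
    · field_simp at hv ⊢
      linear_combination -hv

theorem exists_ne_zero_forall_pair [NeZero (2 : F)] (hI : I * I = -1) (ha : a ≠ 0) :
    ∃ c ≠ 0, ∀ v : F × F, v.1 * v.2 = c → IsDisplacement {a, b} v := by
  have h2 : (2 : F) ≠ 0 := NeZero.ne 2
  suffices ∃ t : F, t ≠ 0 ∧ 1 + t ≠ 0 ∧ a + b / t ≠ 0 by
    obtain ⟨t, ht, ht', hc⟩ := this
    exact ⟨_, mul_ne_zero ht' hc, fun _ => pair_of_mul_eq ht ht' hc⟩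
  by_cases hab : a + b = 0
  · have hI0 : I ≠ 0 := by
      rintro rfl
      simp at hI
    have hI1 : 1 + I ≠ 0 := fun h => h2 (by linear_combination (1 - I) * h + hI)
    refine ⟨I, hI0, hI1, ?_⟩
    have sum_eq : a + b / I = a * (1 + I) := by
      field_simp
      linear_combination hab - a * hI
    rw [sum_eq]
    exact mul_ne_zero ha hI1
  · exact ⟨1, one_ne_zero, by rwa [one_add_one_eq_two], by rwa [div_one]⟩

theorem cons_cons_replicate_three [NeZero (2 : F)] (hI : I * I = -1) (hab : a ≠ b)
    (hc : c ≠ 0) : IsDisplacement (a ::ₘ b ::ₘ Multiset.replicate 3 c) 0 := by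
  by_cases hca : c = a
  · subst hca
    convert replicate_three_add_pair hI hab using 1
    rw [add_comm]
    rfl
  by_cases hcb : c = b
  · subst hcb
    convert replicate_three_add_pair hI hab.symm using 1
    rw [add_comm, Multiset.pair_comm]
    rfl
  convert pair_add_pair_add_singleton (Ne.symm hca) (Ne.symm hcb) hc using 1
  simp [Multiset.cons_swap]

theorem of_card_eq_five [NeZero (2 : F)] (hI : I * I = -1) {s : Multiset F}
    (hs : s.card = 5) (h0 : 0 ∉ s) : IsDisplacement s 0 := by
  obtain ⟨a, h⟩ | ⟨a, b, s, hab, rfl⟩ :=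
    exists_eq_replicate_or_exists_ne_eq_cons_cons (s := s) (by rintro rfl; simp at hs)
  · rw [h, hs]
    exact replicate_five hI a
  have hs : s.card = 3 := by simpa using hs
  obtain ⟨c, h⟩ | ⟨c, d, s, hcd, rfl⟩ :=
    exists_eq_replicate_or_exists_ne_eq_cons_cons (s := s) (by rintro rfl; simp at hs)
  · rw [hs] at h
    subst h
    exact cons_cons_replicate_three hI hab (by rintro rfl; simp at h0)
  obtain ⟨e, rfl⟩ : ∃ e, s = {e} := Multiset.card_eq_one.1 (by simpa using hs)
  exact pair_add_pair_add_singleton hab hcd (by rintro rfl; simp at h0)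

theorem of_five_le_card [NeZero (2 : F)] (hI : I * I = -1) {s : Multiset F}
    (hs : 5 ≤ s.card) (h0 : 0 ∉ s) : IsDisplacement s 0 := by
  generalize hn : s.card = n at hs
  induction n, hs using Nat.le_induction generalizing s with
  | base => exact of_card_eq_five hI hn h0
  | succ n h5 ih =>
    obtain ⟨a, s, rfl, hs⟩ := Multiset.card_eq_succ_iff.1 hn
    obtain ⟨b, hbs⟩ := Multiset.card_pos_iff_exists_mem.1 (by lia : 0 < s.card)
    obtain ⟨s, rfl⟩ := Multiset.exists_cons_of_mem hbs
    simp only [Multiset.mem_cons, not_or] at h0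
    obtain ⟨ha, -, hs0⟩ := h0
    obtain ⟨c, hc, split⟩ := exists_ne_zero_forall_pair hI (b := b) (Ne.symm ha)
    have merged : IsDisplacement (c ::ₘ s) 0 :=
      ih (by simp [hs0, hc.symm]) (by simpa using hs)
    simpa using of_merge split merged

end Field

end IsDisplacement

section Quadrance

variable {F : Type*} [Field F]

/-- The point `(x, y)` whose isotropic coordinates are `x + I y = p.1` and `x - I y = p.2`, where
`I * I = -1`. In these coordinates the quadrance is a product. -/
def ofIsotropic (I : F) (p : F × F) : F × F :=
  ((p.1 + p.2) / 2, I * (p.2 - p.1) / 2)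

theorem quadrance_ofIsotropic [NeZero (2 : F)] {I : F} (hI : I * I = -1) (p q : F × F) :
    quadrance (ofIsotropic I p) (ofIsotropic I q) = (q - p).1 * (q - p).2 := by
  have h2 : (2 : F) ≠ 0 := NeZero.ne 2
  simp only [quadrance, ofIsotropic, Prod.fst_sub, Prod.snd_sub]
  field_simp
  linear_combination ((q.2 - q.1) - (p.2 - p.1)) ^ 2 * hI

end Quadrance

theorem stmt_13_general {F : Type*} [Field F] [NeZero (2 : F)] (hsq : IsSquare (-1 : F)) {n : ℕ}
    (hn : 5 ≤ n) {a : ZMod n → F} (ha : ∀ i, a i ≠ 0) :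
    ∃ A : ZMod n → F × F, ∀ i, quadrance (A i) (A (i + 1)) = a i := by
  obtain ⟨I, hI⟩ := hsq
  have : NeZero n := ⟨by lia⟩
  have closed : IsDisplacement (Finset.univ.val.map a) 0 :=
    .of_five_le_card hI.symm (by simpa using hn) (by simpa using ha)
  obtain ⟨v, hv, hsum⟩ := closed.exists_steps
  obtain ⟨A, hA⟩ := exists_forall_add_one_sub_eq hsum
  refine ⟨fun i => ofIsotropic I (A i), fun i => ?_⟩
  rw [quadrance_ofIsotropic hI.symm, hA, hv i (Finset.mem_univ i)]

theorem stmt_13 (F : Type*) [Field F] [Fintype F] (q : ℕ)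
    (hcard : Fintype.card F = q) (hodd : Odd q) (h4 : q % 4 = 1)
    (n : ℕ) (hn : 5 ≤ n) (a : ZMod n → F) (ha : ∀ i, a i ≠ 0) :
    ∃ A : ZMod n → F × F, ∀ i : ZMod n, quadrance (A i) (A (i + 1)) = a i := by
  have : NeZero (2 : F) :=
    ⟨Ring.two_ne_zero fun h => by have := FiniteField.even_card_of_char_two h; lia⟩
  exact stmt_13_general (FiniteField.isSquare_neg_one_iff.2 (by lia)) hn ha
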